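/- Let N = 3, μ < 0 and λ ∈ ℝ, and let Ω ⊂ ℝ³ be a bounded open set with 0 ∈ Ω such that K₃/3 + (μ/2)·e^{−λ/μ}·|Ω| > 0, where K₃ = ∫_{ℝ³} |∇u_1(x)|² dx and |Ω| is the Lebesgue measure of Ω. Then with ρ, ψ and U_ε as in the context (and with B_{2ρ}(0) ⊂ Ω), there exists ε₀ > 0 such that for every ε ∈ (0, ε₀) and every t ≥ 0, I(t·U_ε) < K₃ / 3. -/

import Mathlib

open MeasureTheory

/-!
Write `K = ∫ |∇u₁|²`. The bubble solves `-Δu = u⁵`, so also `K = ∫ u₁⁶`, and both integrals are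
invariant under the scaling `u₁ ↦ u_ε`. Along the ray `t ↦ t U_ε`, with `s = t²`, the two critical
terms of the energy would therefore give `K (s/2 - s³/6)`, whose maximum `K/3` is attained at
`s = 1`. In dimension three truncating the bubble, and the term in `lam`, both cost `O(ε)`, since
`∫ U_ε²` is of exact order `ε`. This is also the size of `U_ε²` away from the origin, so
`∫ U_ε² log U_ε²` is at most `log ε ∫ U_ε² + O(ε)`. For `μ < 0` the logarithmic term is thus at
most a negative multiple of `s ε |log ε|`, up to `O(ε)`, and beats every error of order `ε`.
-/

section Bubble

variable {E : Type*} [NormedAddCommGroup E]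

/-- The Aubin–Talenti bubble `u_ε` of dimension three, centred at the origin. -/
noncomputable def bubble (ε : ℝ) (x : E) : ℝ :=
  (3 : ℝ) ^ ((1 : ℝ) / 4) * (ε / (ε ^ 2 + ‖x‖ ^ 2)) ^ ((1 : ℝ) / 2)

variable {ε : ℝ}

lemma bubble_pos (hε : 0 < ε) (x : E) : 0 < bubble ε x := by
  unfold bubble
  positivity

lemma bubble_sq (hε : 0 ≤ ε) (x : E) : bubble ε x ^ 2 = √3 * (ε / (ε ^ 2 + ‖x‖ ^ 2)) := by
  have hquarter : ((3 : ℝ) ^ ((1 : ℝ) / 4)) ^ 2 = √3 := by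
    rw [← Real.rpow_natCast, ← Real.rpow_mul (by norm_num), Real.sqrt_eq_rpow]
    norm_num
  rw [bubble, mul_pow, hquarter, ← Real.sqrt_eq_rpow, Real.sq_sqrt (by positivity)]

lemma bubble_pow_six (hε : 0 ≤ ε) (x : E) :
    bubble ε x ^ 6 = 3 * √3 * (ε / (ε ^ 2 + ‖x‖ ^ 2)) ^ 3 := by
  have hsqrt : √3 ^ 3 = 3 * √3 := by rw [pow_succ, Real.sq_sqrt (by norm_num)]
  rw [pow_mul (bubble ε x) 2 3, bubble_sq hε, mul_pow, hsqrt]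

lemma bubble_sq_le (hε : 0 ≤ ε) {x : E} (hx : x ≠ 0) :
    bubble ε x ^ 2 ≤ √3 * (ε / ‖x‖ ^ 2) := by
  rw [bubble_sq hε]
  gcongr
  exact le_add_of_nonneg_left (sq_nonneg ε)

lemma bubble_sq_le_mul_bubble_one_sq (hε : 0 < ε) {r : ℝ} (hr : 0 < r) {x : E} (hx : r ≤ ‖x‖) :
    bubble ε x ^ 2 ≤ (1 + r ^ 2) / r ^ 2 * ε * bubble 1 x ^ 2 := by
  have hdenom : r ^ 2 * (1 + ‖x‖ ^ 2) ≤ (1 + r ^ 2) * (ε ^ 2 + ‖x‖ ^ 2) := by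
    have : r ^ 2 ≤ ‖x‖ ^ 2 := by gcongr
    nlinarith [sq_nonneg ε, mul_nonneg (sq_nonneg ε) (sq_nonneg r)]
  calc bubble ε x ^ 2 = √3 * ε / (ε ^ 2 + ‖x‖ ^ 2) := by rw [bubble_sq hε.le, mul_div_assoc]
    _ ≤ √3 * ε * ((1 + r ^ 2) / (r ^ 2 * (1 + ‖x‖ ^ 2))) := by
      rw [div_eq_mul_inv, ← one_div]
      gcongr ?_ * ?_
      rwa [div_le_div_iff₀ (by positivity) (by positivity), one_mul]
    _ = (1 + r ^ 2) / r ^ 2 * ε * bubble 1 x ^ 2 := by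
      rw [bubble_sq zero_le_one, one_pow]
      field_simp

lemma norm_inv_smul_sq [NormedSpace ℝ E] (ε : ℝ) (x : E) : ‖ε⁻¹ • x‖ ^ 2 = ‖x‖ ^ 2 / ε ^ 2 := by
  rw [norm_smul, mul_pow, Real.norm_eq_abs, sq_abs, inv_pow, inv_mul_eq_div]

lemma bubble_pow_six_eq_scale [NormedSpace ℝ E] (hε : 0 < ε) (x : E) :
    bubble ε x ^ 6 = (ε ^ 3)⁻¹ * bubble 1 (ε⁻¹ • x) ^ 6 := by
  rw [bubble_pow_six hε.le, bubble_pow_six zero_le_one, norm_inv_smul_sq]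
  field_simp

variable [InnerProductSpace ℝ E]

lemma hasFDerivAt_bubble (hε : 0 < ε) (x : E) :
    HasFDerivAt (bubble ε) (-(bubble ε x / (ε ^ 2 + ‖x‖ ^ 2)) • innerSL ℝ x) x := by
  have hpos (y : E) : 0 < ε ^ 2 + ‖y‖ ^ 2 := by positivity
  have hbubble : bubble ε = fun y : E ↦
      (3 : ℝ) ^ ((1 : ℝ) / 4) * ε ^ ((1 : ℝ) / 2) * (ε ^ 2 + ‖y‖ ^ 2) ^ (-(1 : ℝ) / 2) := by
    ext y
    rw [bubble, Real.div_rpow hε.le (hpos y).le, neg_div, Real.rpow_neg (hpos y).le]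
    ring
  have hnorm : HasFDerivAt (fun y : E ↦ ε ^ 2 + ‖y‖ ^ 2) (2 • innerSL ℝ x) x :=
    (hasStrictFDerivAt_norm_sq x).hasFDerivAt.const_add _
  rw [hbubble]
  refine ((hnorm.rpow_const (.inl (hpos x).ne')).const_mul _).congr_fderiv ?_
  ext y
  simp only [Real.rpow_sub_one (hpos x).ne', smul_apply, nsmul_eq_mul,
    smul_eq_mul, innerSL_apply_apply]
  push_cast
  ring

lemma contDiff_bubble {n : WithTop ℕ∞} (hε : 0 < ε) : ContDiff ℝ n (bubble ε : E → ℝ) := by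
  have hpos (x : E) : ε ^ 2 + ‖x‖ ^ 2 ≠ 0 := by positivity
  exact contDiff_const.mul (ContDiff.rpow_const_of_ne
    (contDiff_const.div (contDiff_const.add (contDiff_norm_sq ℝ)) hpos)
    fun x ↦ (div_pos hε (by positivity)).ne')

lemma norm_fderiv_bubble (hε : 0 < ε) (x : E) :
    ‖fderiv ℝ (bubble ε) x‖ = bubble ε x / (ε ^ 2 + ‖x‖ ^ 2) * ‖x‖ := by
  rw [(hasFDerivAt_bubble hε x).fderiv, norm_smul, norm_neg, innerSL_apply_norm,
    Real.norm_of_nonneg (div_nonneg (bubble_pos hε x).le (by positivity))]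

lemma norm_fderiv_bubble_sq (hε : 0 < ε) (x : E) :
    ‖fderiv ℝ (bubble ε) x‖ ^ 2 = √3 * ε * ‖x‖ ^ 2 / (ε ^ 2 + ‖x‖ ^ 2) ^ 3 := by
  rw [norm_fderiv_bubble hε, mul_pow, div_pow, bubble_sq hε.le]
  field_simp

lemma norm_fderiv_bubble_le (hε : 0 < ε) (x : E) :
    ‖fderiv ℝ (bubble ε) x‖ ≤ bubble ε x / ‖x‖ := by
  rcases eq_or_ne x 0 with rfl | hx
  · simp [norm_fderiv_bubble hε]
  have := bubble_pos hε x
  rw [norm_fderiv_bubble hε, div_mul_eq_mul_div, div_le_div_iff₀ (by positivity) (by positivity),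
    mul_assoc]
  gcongr
  nlinarith [sq_nonneg ε]

lemma norm_fderiv_bubble_sq_eq_scale (hε : 0 < ε) (x : E) :
    ‖fderiv ℝ (bubble ε) x‖ ^ 2 = (ε ^ 3)⁻¹ * ‖fderiv ℝ (bubble 1) (ε⁻¹ • x)‖ ^ 2 := by
  rw [norm_fderiv_bubble_sq hε, norm_fderiv_bubble_sq one_pos, norm_inv_smul_sq]
  field_simp

end Bubble

section Integrals

open Filter Module Topology

variable {E : Type*} [NormedAddCommGroup E] [MeasurableSpace E] [BorelSpace E]

section NormedSpace

variable [NormedSpace ℝ E] [FiniteDimensional ℝ E] {μ : Measure E} [μ.IsAddHaarMeasure]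

lemma integrable_inv_one_add_norm_sq_pow {n : ℕ} (hn : finrank ℝ E < 2 * n) :
    Integrable (fun x : E ↦ ((1 + ‖x‖ ^ 2) ^ n)⁻¹) μ := by
  have h := integrable_rpow_neg_one_add_norm_sq (μ := μ) (r := (2 * n : ℕ)) (by exact_mod_cast hn)
  refine h.congr (.of_forall fun x ↦ ?_)
  have hpos : 0 ≤ 1 + ‖x‖ ^ 2 := by positivity
  simp only [Nat.cast_mul, Nat.cast_ofNat, neg_div, mul_div_cancel_left₀ (n : ℝ) two_ne_zero,
    Real.rpow_neg hpos, Real.rpow_natCast]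

lemma integral_fun_norm_eq_zero_of_hasDerivAt [Nontrivial E] {f F : ℝ → ℝ}
    (hf : Integrable (fun x : E ↦ f ‖x‖) μ)
    (hF : ∀ r, HasDerivAt F (r ^ (finrank ℝ E - 1) * f r) r)
    (hF0 : F 0 = 0) (hF_top : Tendsto F atTop (𝓝 0)) : ∫ x, f ‖x‖ ∂μ = 0 := by
  have hradial := integral_Ioi_of_hasDerivAt_of_tendsto (hF 0).continuousAt.continuousWithinAt
    (fun r _ ↦ hF r) ((integrable_fun_norm_addHaar μ).mp hf) hF_top
  simp only [integral_fun_norm_addHaar, smul_eq_mul, hradial, hF0, sub_zero, mul_zero, smul_zero]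

lemma integrableOn_ball_fun_norm_div_norm_pow [Nontrivial E] {f : ℝ → ℝ} {R : ℝ} :
    IntegrableOn (fun x : E ↦ f ‖x‖ / ‖x‖ ^ (finrank ℝ E - 1)) (Metric.ball 0 R) μ ↔
      IntegrableOn f (Set.Ioo 0 R) := by
  rw [integrableOn_fun_norm_addHaar μ (f := fun r ↦ f r / r ^ (finrank ℝ E - 1))]
  refine integrableOn_congr_fun (fun r hr ↦ ?_) measurableSet_Ioo
  exact mul_div_cancel₀ (f r) (pow_ne_zero _ hr.1.ne')

lemma integral_inv_pow_finrank_mul_comp_inv_smul {R : ℝ} (hR : 0 < R) (f : E → ℝ) :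
    ∫ x, (R ^ finrank ℝ E)⁻¹ * f (R⁻¹ • x) ∂μ = ∫ x, f x ∂μ := by
  rw [integral_const_mul, Measure.integral_comp_inv_smul_of_nonneg _ _ hR.le, smul_eq_mul,
    inv_mul_cancel_left₀ (by positivity)]

end NormedSpace

variable [InnerProductSpace ℝ E] [FiniteDimensional ℝ E] {ε : ℝ}
  [Fact (finrank ℝ E = 3)]

lemma integrable_bubble_pow_six (hε : 0 < ε) : Integrable (fun x : E ↦ bubble ε x ^ 6) := by
  have hone : Integrable (fun x : E ↦ bubble 1 x ^ 6) := by
    refine ((integrable_inv_one_add_norm_sq_pow (n := 3) ?_).const_mul (3 * √3)).congr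
      (.of_forall fun x ↦ ?_)
    · simp [Fact.out (p := finrank ℝ E = 3)]
    · simp only [bubble_pow_six zero_le_one, one_pow, one_div, inv_pow]
  simp only [bubble_pow_six_eq_scale hε]
  exact (hone.comp_smul (inv_ne_zero hε.ne')).const_mul _

lemma integrable_norm_fderiv_bubble_sq (hε : 0 < ε) :
    Integrable (fun x : E ↦ ‖fderiv ℝ (bubble ε) x‖ ^ 2) := by
  have hone : Integrable (fun x : E ↦ ‖fderiv ℝ (bubble 1) x‖ ^ 2) := by
    refine ((integrable_inv_one_add_norm_sq_pow (n := 2) ?_).const_mul √3).mono'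
      (((contDiff_bubble one_pos).continuous_fderiv one_ne_zero).norm.pow 2).aestronglyMeasurable
      (.of_forall fun x ↦ ?_)
    · simp [Fact.out (p := finrank ℝ E = 3)]
    · rw [Real.norm_of_nonneg (by positivity), norm_fderiv_bubble_sq one_pos, ← div_eq_mul_inv,
        div_le_div_iff₀ (by positivity) (by positivity), one_pow, pow_succ _ 2, mul_one]
      calc √3 * ‖x‖ ^ 2 * (1 + ‖x‖ ^ 2) ^ 2 ≤ √3 * (1 + ‖x‖ ^ 2) * (1 + ‖x‖ ^ 2) ^ 2 := by
            gcongr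
            exact le_add_of_nonneg_left zero_le_one
        _ = √3 * ((1 + ‖x‖ ^ 2) ^ 2 * (1 + ‖x‖ ^ 2)) := by ring
  simp only [norm_fderiv_bubble_sq_eq_scale hε]
  exact (hone.comp_smul (inv_ne_zero hε.ne')).const_mul _

lemma integral_bubble_pow_six_eq_one (hε : 0 < ε) :
    ∫ x : E, bubble ε x ^ 6 = ∫ x : E, bubble 1 x ^ 6 := by
  simpa only [bubble_pow_six_eq_scale hε, Fact.out (p := finrank ℝ E = 3)] using
    integral_inv_pow_finrank_mul_comp_inv_smul hε fun x : E ↦ bubble 1 x ^ 6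

lemma integral_norm_fderiv_bubble_sq_eq_one (hε : 0 < ε) :
    ∫ x : E, ‖fderiv ℝ (bubble ε) x‖ ^ 2 = ∫ x : E, ‖fderiv ℝ (bubble 1) x‖ ^ 2 := by
  simpa only [norm_fderiv_bubble_sq_eq_scale hε, Fact.out (p := finrank ℝ E = 3)] using
    integral_inv_pow_finrank_mul_comp_inv_smul hε fun x : E ↦ ‖fderiv ℝ (bubble 1) x‖ ^ 2

lemma hasDerivAt_cube_div_one_add_sq_sq (r : ℝ) :
    HasDerivAt (fun r : ℝ ↦ r ^ 3 / (1 + r ^ 2) ^ 2)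
      (r ^ 2 * ((3 - r ^ 2) / (1 + r ^ 2) ^ 3)) r := by
  have hdenom : HasDerivAt (fun r : ℝ ↦ (1 + r ^ 2) ^ 2) (2 * (1 + r ^ 2) * (2 * r)) r := by
    simpa using ((hasDerivAt_pow 2 r).const_add 1).fun_pow 2
  refine ((hasDerivAt_pow 3 r).fun_div hdenom (by positivity)).congr_deriv ?_
  field_simp
  ring

lemma tendsto_cube_div_one_add_sq_sq :
    Tendsto (fun r : ℝ ↦ r ^ 3 / (1 + r ^ 2) ^ 2) atTop (𝓝 0) := by
  refine squeeze_zero' ?_ ?_ tendsto_inv_atTop_zero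
  · filter_upwards [eventually_ge_atTop 0] with r hr
    positivity
  · filter_upwards [eventually_gt_atTop 0] with r hr
    rw [inv_eq_one_div, div_le_div_iff₀ (by positivity) hr]
    nlinarith [sq_nonneg r]

lemma integral_bubble_pow_six_eq_integral_norm_fderiv_sq :
    ∫ x : E, bubble 1 x ^ 6 = ∫ x : E, ‖fderiv ℝ (bubble 1) x‖ ^ 2 := by
  have hE : finrank ℝ E = 3 := Fact.out
  have := Module.nontrivial_of_finrank_eq_succ hE
  have hdiff (x : E) : bubble 1 x ^ 6 - ‖fderiv ℝ (bubble 1) x‖ ^ 2 =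
      √3 * ((3 - ‖x‖ ^ 2) / (1 + ‖x‖ ^ 2) ^ 3) := by
    rw [bubble_pow_six zero_le_one, norm_fderiv_bubble_sq one_pos]
    field_simp
  have hint := (integrable_bubble_pow_six one_pos).sub
    (integrable_norm_fderiv_bubble_sq (E := E) one_pos)
  have hzero := integral_sub (integrable_bubble_pow_six one_pos)
    (integrable_norm_fderiv_bubble_sq (E := E) one_pos)
  simp only [Pi.sub_def, hdiff] at hint hzero
  -- The antiderivative `√3 r³ / (1 + r²)²` is the flux `-r² u₁(r) u₁'(r)`.
  rw [integral_fun_norm_eq_zero_of_hasDerivAt (f := fun r ↦ √3 * ((3 - r ^ 2) / (1 + r ^ 2) ^ 3))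
    (F := fun r ↦ √3 * (r ^ 3 / (1 + r ^ 2) ^ 2)) hint (fun r ↦ ?_) (by simp)
    (by simpa using tendsto_cube_div_one_add_sq_sq.const_mul √3)] at hzero
  · exact sub_eq_zero.mp hzero.symm
  · rw [hE, mul_left_comm]
    exact (hasDerivAt_cube_div_one_add_sq_sq r).const_mul √3

lemma integral_norm_fderiv_bubble_sq_pos : 0 < ∫ x : E, ‖fderiv ℝ (bubble 1) x‖ ^ 2 := by
  have hsupp : Function.support (fun x : E ↦ bubble 1 x ^ 6) = Set.univ :=
    Set.eq_univ_of_forall fun x ↦ (pow_pos (bubble_pos one_pos x) 6).ne'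
  rw [← integral_bubble_pow_six_eq_integral_norm_fderiv_sq,
    integral_pos_iff_support_of_nonneg (fun x ↦ by positivity) (integrable_bubble_pow_six one_pos),
    hsupp]
  exact NeZero.pos _

end Integrals

lemma continuous_sq_mul_log_sq : Continuous (fun s : ℝ ↦ s ^ 2 * Real.log (s ^ 2)) :=
  Real.continuous_mul_log.comp (continuous_pow 2)

lemma mul_log_le_of_le_mul {q ε a : ℝ} (hq : 0 ≤ q) (hε : 0 < ε) (ha : 0 < a) (h : q ≤ ε * a) :
    q * Real.log q ≤ Real.log ε * q + ε * (a * |Real.log a|) := by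
  rcases hq.eq_or_lt with rfl | hq
  · simpa only [zero_mul, mul_zero, zero_add] using by positivity
  calc q * Real.log q ≤ q * (Real.log ε + Real.log a) := by
        rw [← Real.log_mul hε.ne' ha.ne']
        gcongr
    _ ≤ q * Real.log ε + q * |Real.log a| := by
        rw [mul_add]
        gcongr
        exact le_abs_self _
    _ ≤ Real.log ε * q + ε * (a * |Real.log a|) := by
        rw [mul_comm q, ← mul_assoc]
        gcongr

section Cutoff

open Filter Module Topology

variable {E : Type*} [NormedAddCommGroup E] {φ : E → ℝ} {ε : ℝ}

/-- The truncated bubble `U_ε = φ u_ε`; the cutoff `φ` need not be radial. -/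
noncomputable def cutoffBubble (φ : E → ℝ) (ε : ℝ) (x : E) : ℝ := φ x * bubble ε x

lemma cutoffBubble_nonneg (hφ : ∀ x, 0 ≤ φ x) (hε : 0 < ε) (x : E) : 0 ≤ cutoffBubble φ ε x :=
  mul_nonneg (hφ x) (bubble_pos hε x).le

lemma support_cutoffBubble_subset : Function.support (cutoffBubble φ ε) ⊆ Function.support φ :=
  Function.support_mul_subset_left _ _

lemma hasCompactSupport_cutoffBubble (hφc : HasCompactSupport φ) :
    HasCompactSupport (cutoffBubble φ ε) :=
  hφc.mul_right

lemma cutoffBubble_sq_le {P : ℝ} (hε : 0 ≤ ε) {x : E} (hx : x ≠ 0) (hP : ‖φ x‖ ≤ P) :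
    cutoffBubble φ ε x ^ 2 ≤ ε * (P ^ 2 * √3 / ‖x‖ ^ 2) := by
  calc cutoffBubble φ ε x ^ 2 = ‖φ x‖ ^ 2 * bubble ε x ^ 2 := by
        rw [cutoffBubble, mul_pow, Real.norm_eq_abs, sq_abs]
    _ ≤ P ^ 2 * (√3 * (ε / ‖x‖ ^ 2)) := by
        gcongr
        exact bubble_sq_le hε hx
    _ = ε * (P ^ 2 * √3 / ‖x‖ ^ 2) := by ring

lemma exists_cutoffBubble_sq_le (hφ : Continuous φ) (hφc : HasCompactSupport φ) :
    ∃ c R, 0 < c ∧ Function.support φ ⊆ Metric.ball 0 R ∧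
      ∀ ε, 0 < ε → ∀ x, x ≠ 0 → cutoffBubble φ ε x ^ 2 ≤ ε * (c / ‖x‖ ^ 2) := by
  obtain ⟨P, hP⟩ := hφc.exists_bound_of_continuous hφ
  obtain ⟨R, -, hR⟩ := hφc.isCompact.isBounded.subset_ball_lt 0 0
  have hP' (x : E) : ‖φ x‖ ≤ |P| + 1 := by linarith [hP x, le_abs_self P]
  exact ⟨(|P| + 1) ^ 2 * √3, R, by positivity, (subset_tsupport φ).trans hR,
    fun ε hε x hx ↦ cutoffBubble_sq_le hε.le hx (hP' x)⟩

lemma norm_fderiv_cutoffBubble_le [InnerProductSpace ℝ E] (hφ : Differentiable ℝ φ) (hε : 0 < ε)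
    {P Q r : ℝ} (hr : 0 < r) {x : E} (hx : r ≤ ‖x‖) (hP : ‖φ x‖ ≤ P) (hQ : ‖fderiv ℝ φ x‖ ≤ Q) :
    ‖fderiv ℝ (cutoffBubble φ ε) x‖ ≤ (P / r + Q) * bubble ε x := by
  have hbubble := bubble_pos hε x
  have hP0 := (norm_nonneg _).trans hP
  have hderiv := ((hφ x).hasFDerivAt.mul (hasFDerivAt_bubble hε x).differentiableAt.hasFDerivAt)
  calc ‖fderiv ℝ (cutoffBubble φ ε) x‖
      = ‖φ x • fderiv ℝ (bubble ε) x + bubble ε x • fderiv ℝ φ x‖ := by rw [← hderiv.fderiv]; rfl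
    _ ≤ ‖φ x‖ * ‖fderiv ℝ (bubble ε) x‖ + bubble ε x * ‖fderiv ℝ φ x‖ := by
        simpa only [norm_smul, Real.norm_of_nonneg hbubble.le] using
          norm_add_le (φ x • fderiv ℝ (bubble ε) x) (bubble ε x • fderiv ℝ φ x)
    _ ≤ P * (bubble ε x / r) + bubble ε x * Q := by
        gcongr
        exact (norm_fderiv_bubble_le hε x).trans (by gcongr)
    _ = (P / r + Q) * bubble ε x := by ring

variable [InnerProductSpace ℝ E]

lemma contDiff_cutoffBubble {n : WithTop ℕ∞} (hφ : ContDiff ℝ n φ) (hε : 0 < ε) :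
    ContDiff ℝ n (cutoffBubble φ ε) :=
  hφ.mul (contDiff_bubble hε)

lemma continuous_cutoffBubble (hφ : Continuous φ) (hε : 0 < ε) : Continuous (cutoffBubble φ ε) :=
  hφ.mul (contDiff_bubble (n := 0) hε).continuous

lemma exists_norm_fderiv_cutoffBubble_sq_le (hφ : ContDiff ℝ 1 φ) (hφc : HasCompactSupport φ)
    (hφ1 : φ =ᶠ[𝓝 0] 1) :
    ∃ C, 0 ≤ C ∧ ∀ ε, 0 < ε → ∀ x, ‖fderiv ℝ (cutoffBubble φ ε) x‖ ^ 2 ≤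
      ‖fderiv ℝ (bubble ε) x‖ ^ 2 + C * ε := by
  obtain ⟨P, hP⟩ := hφc.exists_bound_of_continuous hφ.continuous
  obtain ⟨Q, hQ⟩ := (hφc.fderiv ℝ).exists_bound_of_continuous (hφ.continuous_fderiv one_ne_zero)
  obtain ⟨r, hr, hball⟩ := Metric.eventually_nhds_iff_ball.mp hφ1
  refine ⟨(P / r + Q) ^ 2 * (√3 / r ^ 2), by positivity, fun ε hε x ↦ ?_⟩
  rcases lt_or_ge ‖x‖ r with hx | hx
  · have hlocal : cutoffBubble φ ε =ᶠ[𝓝 x] bubble ε := by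
      filter_upwards [Metric.isOpen_ball.mem_nhds (mem_ball_zero_iff.mpr hx)] with y hy
      rw [cutoffBubble, hball y hy, Pi.one_apply, one_mul]
    rw [hlocal.fderiv_eq]
    exact le_add_of_nonneg_right (by positivity)
  · have hx0 : x ≠ 0 := norm_pos_iff.mp (hr.trans_le hx)
    calc ‖fderiv ℝ (cutoffBubble φ ε) x‖ ^ 2 ≤ ((P / r + Q) * bubble ε x) ^ 2 := by
          gcongr
          exact norm_fderiv_cutoffBubble_le (hφ.differentiable one_ne_zero) hε hr hx (hP x) (hQ x)
      _ ≤ (P / r + Q) ^ 2 * (√3 * (ε / r ^ 2)) := by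
          rw [mul_pow]
          gcongr
          exact (bubble_sq_le hε.le hx0).trans (by gcongr)
      _ = (P / r + Q) ^ 2 * (√3 / r ^ 2) * ε := by ring
      _ ≤ _ := le_add_of_nonneg_left (sq_nonneg _)

variable [FiniteDimensional ℝ E] [MeasurableSpace E] [BorelSpace E]

lemma integrable_comp_cutoffBubble (hφ : Continuous φ) (hφc : HasCompactSupport φ) (hε : 0 < ε)
    {f : ℝ → ℝ} (hf : Continuous f) (hf0 : f 0 = 0) :
    Integrable (fun x ↦ f (cutoffBubble φ ε x)) :=
  (hf.comp (continuous_cutoffBubble hφ hε)).integrable_of_hasCompactSupport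
    ((hasCompactSupport_cutoffBubble hφc).comp_left hf0)

lemma integrable_norm_fderiv_cutoffBubble_sq (hφ : ContDiff ℝ 1 φ) (hφc : HasCompactSupport φ)
    (hε : 0 < ε) : Integrable (fun x ↦ ‖fderiv ℝ (cutoffBubble φ ε) x‖ ^ 2) := by
  have hcont : Continuous (fderiv ℝ (cutoffBubble φ ε)) :=
    (contDiff_cutoffBubble hφ hε).continuous_fderiv one_ne_zero
  have hsupp : HasCompactSupport (fderiv ℝ (cutoffBubble φ ε)) :=
    (hasCompactSupport_cutoffBubble hφc).fderiv ℝ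
  have hsupp_sq : HasCompactSupport (fun x ↦ ‖fderiv ℝ (cutoffBubble φ ε) x‖ ^ 2) :=
    .intro hsupp fun x hx ↦ by rw [image_eq_zero_of_notMem_tsupport hx, norm_zero, sq, zero_mul]
  exact (hcont.norm.pow 2).integrable_of_hasCompactSupport hsupp_sq

lemma setIntegral_comp_cutoffBubble {s : Set E} (hs : Function.support φ ⊆ s) {f : ℝ → ℝ}
    (hf0 : f 0 = 0) : ∫ x in s, f (cutoffBubble φ ε x) = ∫ x, f (cutoffBubble φ ε x) := by
  refine setIntegral_eq_integral_of_forall_compl_eq_zero fun x hx ↦ ?_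
  rw [Function.notMem_support.mp fun h ↦ hx (hs (support_cutoffBubble_subset h)), hf0]

section DimensionThree

variable [Fact (finrank ℝ E = 3)]

lemma exists_integral_norm_fderiv_cutoffBubble_sq_le (hφ : ContDiff ℝ 1 φ)
    (hφc : HasCompactSupport φ) (hφ1 : φ =ᶠ[𝓝 0] 1) :
    ∃ C, 0 ≤ C ∧ ∀ ε, 0 < ε → ∫ x, ‖fderiv ℝ (cutoffBubble φ ε) x‖ ^ 2 ≤
      (∫ x : E, ‖fderiv ℝ (bubble 1) x‖ ^ 2) + C * ε := by
  obtain ⟨C, hC, hbound⟩ := exists_norm_fderiv_cutoffBubble_sq_le hφ hφc hφ1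
  refine ⟨C * volume.real (tsupport φ), by positivity, fun ε hε ↦ ?_⟩
  have hbubble : Integrable (fun x : E ↦ ‖fderiv ℝ (bubble ε) x‖ ^ 2) :=
    integrable_norm_fderiv_bubble_sq hε
  have hconst : IntegrableOn (fun _ : E ↦ C * ε) (tsupport φ) :=
    integrableOn_const hφc.measure_lt_top.ne
  have hsum : IntegrableOn (fun x ↦ ‖fderiv ℝ (bubble ε) x‖ ^ 2 + C * ε) (tsupport φ) :=
    hbubble.integrableOn.add hconst
  have hzero : ∀ x ∉ tsupport φ, ‖fderiv ℝ (cutoffBubble φ ε) x‖ ^ 2 = 0 := fun x hx ↦ by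
    have : x ∉ tsupport (cutoffBubble φ ε) :=
      fun h ↦ hx (closure_mono support_cutoffBubble_subset h)
    rw [fderiv_of_notMem_tsupport ℝ this, norm_zero, zero_pow two_ne_zero]
  calc ∫ x, ‖fderiv ℝ (cutoffBubble φ ε) x‖ ^ 2
      = ∫ x in tsupport φ, ‖fderiv ℝ (cutoffBubble φ ε) x‖ ^ 2 :=
        (setIntegral_eq_integral_of_forall_compl_eq_zero hzero).symm
    _ ≤ ∫ x in tsupport φ, (‖fderiv ℝ (bubble ε) x‖ ^ 2 + C * ε) :=
        integral_mono (integrable_norm_fderiv_cutoffBubble_sq hφ hφc hε).integrableOn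
          hsum (hbound ε hε)
    _ = (∫ x in tsupport φ, ‖fderiv ℝ (bubble ε) x‖ ^ 2) + C * volume.real (tsupport φ) * ε := by
        rw [integral_add hbubble.integrableOn hconst, setIntegral_const, smul_eq_mul]
        ring
    _ ≤ (∫ x, ‖fderiv ℝ (bubble ε) x‖ ^ 2) + C * volume.real (tsupport φ) * ε := by
        gcongr ?_ + _
        exact setIntegral_le_integral hbubble (.of_forall fun x ↦ sq_nonneg _)
    _ = _ := by rw [integral_norm_fderiv_bubble_sq_eq_one hε]

lemma exists_le_integral_cutoffBubble_pow_six (hφ : Continuous φ) (hφc : HasCompactSupport φ)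
    (hφ1 : φ =ᶠ[𝓝 0] 1) :
    ∃ C, 0 ≤ C ∧ ∀ ε, 0 < ε →
      (∫ x : E, ‖fderiv ℝ (bubble 1) x‖ ^ 2) - C * ε ^ 3 ≤ ∫ x, cutoffBubble φ ε x ^ 6 := by
  obtain ⟨r, hr, hball⟩ := Metric.eventually_nhds_iff_ball.mp hφ1
  set A := (1 + r ^ 2) / r ^ 2
  have hA : 0 ≤ A ^ 3 := by positivity
  refine ⟨A ^ 3 * ∫ x : E, bubble 1 x ^ 6, mul_nonneg hA (by positivity), fun ε hε ↦ ?_⟩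
  have hone : Integrable (fun x : E ↦ bubble 1 x ^ 6) := integrable_bubble_pow_six one_pos
  have hbubble : Integrable (fun x : E ↦ bubble ε x ^ 6) := integrable_bubble_pow_six hε
  have hbound (x : E) :
      bubble ε x ^ 6 - (A * ε) ^ 3 * bubble 1 x ^ 6 ≤ cutoffBubble φ ε x ^ 6 := by
    rcases lt_or_ge ‖x‖ r with hx | hx
    · rw [cutoffBubble, hball x (mem_ball_zero_iff.mpr hx), Pi.one_apply, one_mul]
      exact sub_le_self _ (by positivity)
    · calc bubble ε x ^ 6 - (A * ε) ^ 3 * bubble 1 x ^ 6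
          = (bubble ε x ^ 2) ^ 3 - (A * ε * bubble 1 x ^ 2) ^ 3 := by ring
        _ ≤ 0 := by
            rw [sub_nonpos]
            gcongr
            exact bubble_sq_le_mul_bubble_one_sq hε hr hx
        _ ≤ cutoffBubble φ ε x ^ 6 := by positivity
  calc (∫ x : E, ‖fderiv ℝ (bubble 1) x‖ ^ 2) - A ^ 3 * (∫ x : E, bubble 1 x ^ 6) * ε ^ 3
      = ∫ x, (bubble ε x ^ 6 - (A * ε) ^ 3 * bubble 1 x ^ 6) := by
        rw [integral_sub hbubble (hone.const_mul _), integral_bubble_pow_six_eq_one hε,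
          integral_const_mul, integral_bubble_pow_six_eq_integral_norm_fderiv_sq]
        ring
    _ ≤ ∫ x, cutoffBubble φ ε x ^ 6 :=
        integral_mono (hbubble.sub (hone.const_mul _))
          (integrable_comp_cutoffBubble hφ hφc hε (continuous_pow 6) (by simp)) hbound

lemma integrableOn_ball_const_div_norm_sq (c R : ℝ) :
    IntegrableOn (fun x : E ↦ c / ‖x‖ ^ 2) (Metric.ball 0 R) := by
  have hE : finrank ℝ E = 3 := Fact.out
  have := Module.nontrivial_of_finrank_eq_succ hE
  have hconst : IntegrableOn (fun _ ↦ c) (Set.Ioo 0 R) := integrableOn_const measure_Ioo_lt_top.ne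
  simpa only [hE] using (integrableOn_ball_fun_norm_div_norm_pow (E := E) (μ := volume)).mpr hconst

lemma integrableOn_ball_const_div_norm_sq_mul_abs_log {c : ℝ} (hc : 0 < c) (R : ℝ) :
    IntegrableOn (fun x : E ↦ c / ‖x‖ ^ 2 * |Real.log (c / ‖x‖ ^ 2)|) (Metric.ball 0 R) := by
  have hE : finrank ℝ E = 3 := Fact.out
  have := Module.nontrivial_of_finrank_eq_succ hE
  have hlog : IntegrableOn (fun r ↦ c * |Real.log c - 2 * Real.log r|) (Set.Ioo 0 R) :=
    ((intervalIntegrable_const.sub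
      (intervalIntegral.intervalIntegrable_log'.const_mul 2)).abs.const_mul c).1.mono_set
      Set.Ioo_subset_Ioc_self
  have hlog' : IntegrableOn (fun r ↦ c * |Real.log (c / r ^ 2)|) (Set.Ioo 0 R) := by
    refine hlog.congr_fun (fun r hr ↦ ?_) measurableSet_Ioo
    simp only [Real.log_div hc.ne' (pow_pos hr.1 2).ne', Real.log_pow, Nat.cast_ofNat]
  simpa only [hE, mul_div_right_comm] using
    (integrableOn_ball_fun_norm_div_norm_pow (E := E) (μ := volume)).mpr hlog'

lemma exists_integral_cutoffBubble_sq_le (hφ : Continuous φ) (hφc : HasCompactSupport φ) :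
    ∃ C, 0 ≤ C ∧ ∀ ε, 0 < ε → ∫ x, cutoffBubble φ ε x ^ 2 ≤ C * ε := by
  have hE : finrank ℝ E = 3 := Fact.out
  have := Module.nontrivial_of_finrank_eq_succ hE
  obtain ⟨c, R, hc, hR, hbound⟩ := exists_cutoffBubble_sq_le hφ hφc
  refine ⟨∫ x in Metric.ball (0 : E) R, c / ‖x‖ ^ 2, by positivity, fun ε hε ↦ ?_⟩
  have hint := integrable_comp_cutoffBubble hφ hφc hε (continuous_pow 2) (by simp)
  have hbound : ∀ᵐ x ∂volume.restrict (Metric.ball (0 : E) R),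
      cutoffBubble φ ε x ^ 2 ≤ ε * (c / ‖x‖ ^ 2) :=
    ae_restrict_of_ae ((Measure.ae_ne volume 0).mono (hbound ε hε))
  calc ∫ x, cutoffBubble φ ε x ^ 2 = ∫ x in Metric.ball (0 : E) R, cutoffBubble φ ε x ^ 2 :=
        (setIntegral_comp_cutoffBubble hR (f := (· ^ 2)) (by simp)).symm
    _ ≤ ∫ x in Metric.ball (0 : E) R, ε * (c / ‖x‖ ^ 2) :=
        integral_mono_ae hint.integrableOn
          ((integrableOn_ball_const_div_norm_sq c R).const_mul ε) hbound
    _ = _ := by rw [integral_const_mul, mul_comm]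

lemma exists_integral_cutoffBubble_sq_mul_log_le (hφ : Continuous φ) (hφc : HasCompactSupport φ) :
    ∃ C, 0 ≤ C ∧ ∀ ε, 0 < ε →
      ∫ x, cutoffBubble φ ε x ^ 2 * Real.log (cutoffBubble φ ε x ^ 2) ≤
        Real.log ε * (∫ x, cutoffBubble φ ε x ^ 2) + C * ε := by
  have hE : finrank ℝ E = 3 := Fact.out
  have := Module.nontrivial_of_finrank_eq_succ hE
  obtain ⟨c, R, hc, hR, hbound⟩ := exists_cutoffBubble_sq_le hφ hφc
  refine ⟨∫ x in Metric.ball (0 : E) R, c / ‖x‖ ^ 2 * |Real.log (c / ‖x‖ ^ 2)|, by positivity,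
    fun ε hε ↦ ?_⟩
  have hsq := integrable_comp_cutoffBubble hφ hφc hε (continuous_pow 2) (by simp)
  have hsqlog := integrable_comp_cutoffBubble hφ hφc hε continuous_sq_mul_log_sq (by simp)
  have hweight := integrableOn_ball_const_div_norm_sq_mul_abs_log (E := E) hc R
  have hbound : ∀ᵐ x ∂volume.restrict (Metric.ball (0 : E) R),
      cutoffBubble φ ε x ^ 2 * Real.log (cutoffBubble φ ε x ^ 2) ≤
        Real.log ε * cutoffBubble φ ε x ^ 2 + ε * (c / ‖x‖ ^ 2 * |Real.log (c / ‖x‖ ^ 2)|) := by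
    refine ae_restrict_of_ae ((Measure.ae_ne volume 0).mono fun x hx ↦ ?_)
    exact mul_log_le_of_le_mul (sq_nonneg _) hε (by positivity) (hbound ε hε x hx)
  calc ∫ x, cutoffBubble φ ε x ^ 2 * Real.log (cutoffBubble φ ε x ^ 2)
      = ∫ x in Metric.ball (0 : E) R, cutoffBubble φ ε x ^ 2 * Real.log (cutoffBubble φ ε x ^ 2) :=
        (setIntegral_comp_cutoffBubble hR (f := fun s ↦ s ^ 2 * Real.log (s ^ 2)) (by simp)).symm
    _ ≤ ∫ x in Metric.ball (0 : E) R, (Real.log ε * cutoffBubble φ ε x ^ 2 +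
          ε * (c / ‖x‖ ^ 2 * |Real.log (c / ‖x‖ ^ 2)|)) :=
        integral_mono_ae hsqlog.integrableOn
          ((hsq.integrableOn.const_mul _).add (hweight.const_mul _)) hbound
    _ = _ := by
        rw [integral_add (hsq.integrableOn.const_mul _) (hweight.const_mul _), integral_const_mul,
          integral_const_mul, setIntegral_comp_cutoffBubble hR (f := (· ^ 2)) (by simp), mul_comm ε]

end DimensionThree

lemma exists_le_integral_cutoffBubble_sq (hφ : Continuous φ) (hφc : HasCompactSupport φ)
    (hφ1 : φ =ᶠ[𝓝 0] 1) :
    ∃ m, 0 < m ∧ ∀ ε ∈ Set.Ioc (0 : ℝ) 1, m * ε ≤ ∫ x, cutoffBubble φ ε x ^ 2 := by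
  obtain ⟨r, hr, hball⟩ := Metric.eventually_nhds_iff_ball.mp hφ1
  have hvol : 0 < volume.real (Metric.ball (0 : E) r) :=
    ENNReal.toReal_pos (Metric.measure_ball_pos volume _ hr).ne' measure_ball_lt_top.ne
  refine ⟨√3 / (1 + r ^ 2) * volume.real (Metric.ball (0 : E) r), by positivity, ?_⟩
  rintro ε ⟨hε, hε1⟩
  have hint := integrable_comp_cutoffBubble hφ hφc hε (continuous_pow 2) (by simp)
  have hbound : ∀ x ∈ Metric.ball (0 : E) r, √3 / (1 + r ^ 2) * ε ≤ cutoffBubble φ ε x ^ 2 := by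
    intro x hx
    rw [cutoffBubble, hball x hx, Pi.one_apply, one_mul, bubble_sq hε.le, div_mul_eq_mul_div,
      mul_div_assoc]
    gcongr
    · exact pow_le_one₀ hε.le hε1
    · exact (mem_ball_zero_iff.mp hx).le
  calc √3 / (1 + r ^ 2) * volume.real (Metric.ball (0 : E) r) * ε
      = ∫ x in Metric.ball (0 : E) r, √3 / (1 + r ^ 2) * ε := by
        rw [setIntegral_const, smul_eq_mul]
        ring
    _ ≤ ∫ x in Metric.ball (0 : E) r, cutoffBubble φ ε x ^ 2 :=
        setIntegral_mono_on (integrableOn_const measure_ball_lt_top.ne) hint.integrableOn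
          measurableSet_ball hbound
    _ ≤ ∫ x, cutoffBubble φ ε x ^ 2 :=
        setIntegral_le_integral hint (.of_forall fun x ↦ sq_nonneg _)

end Cutoff

section Energy

open Filter Module Topology

/-- A `C¹` function `φ ≥ 0` that is compactly supported, vanishes off `Ω` and equals `1` near the
origin, so that `cutoffBubble φ ε` is an admissible test function on `Ω`. -/
structure IsCutoffNearZero {E : Type*} [NormedAddCommGroup E] [NormedSpace ℝ E] (φ : E → ℝ)
    (Ω : Set E) : Prop where
  contDiff : ContDiff ℝ 1 φ
  hasCompactSupport : HasCompactSupport φ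
  nonneg : ∀ x, 0 ≤ φ x
  eventuallyEq_one : φ =ᶠ[𝓝 0] 1
  support_subset : Function.support φ ⊆ Ω

/-- The energy functional `I` of the logarithmic Brezis–Nirenberg problem on `Ω` in dimension three,
where the critical exponent is `6`. -/
noncomputable def logEnergy {E : Type*} [NormedAddCommGroup E] [NormedSpace ℝ E] [MeasureSpace E]
    (lam μ : ℝ) (Ω : Set E) (v : E → ℝ) : ℝ :=
  (1 / 2) * (∫ x in Ω, ‖fderiv ℝ v x‖ ^ 2) - (1 / 6) * (∫ x in Ω, (max (v x) 0) ^ 6) -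
    (lam / 2) * (∫ x in Ω, (max (v x) 0) ^ 2) -
    (μ / 2) * (∫ x in Ω, (max (v x) 0) ^ 2 * (Real.log ((max (v x) 0) ^ 2) - 1))

lemma logEnergy_const_mul {E : Type*} [NormedAddCommGroup E] [NormedSpace ℝ E] [MeasureSpace E]
    (lam μ : ℝ) {Ω : Set E} {v : E → ℝ} (hv : ∀ x, 0 ≤ v x)
    (hsq : IntegrableOn (fun x ↦ v x ^ 2) Ω)
    (hsqlog : IntegrableOn (fun x ↦ v x ^ 2 * Real.log (v x ^ 2)) Ω) {t : ℝ} (ht : 0 ≤ t) :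
    logEnergy lam μ Ω (fun x ↦ t * v x) =
      t ^ 2 / 2 * (∫ x in Ω, ‖fderiv ℝ v x‖ ^ 2) - t ^ 6 / 6 * (∫ x in Ω, v x ^ 6) -
        t ^ 2 / 2 * (lam + μ * (Real.log (t ^ 2) - 1)) * (∫ x in Ω, v x ^ 2) -
        μ / 2 * t ^ 2 * ∫ x in Ω, v x ^ 2 * Real.log (v x ^ 2) := by
  have hgrad (x : E) : ‖fderiv ℝ (fun x ↦ t * v x) x‖ ^ 2 = t ^ 2 * ‖fderiv ℝ v x‖ ^ 2 := by
    have : fderiv ℝ (fun x ↦ t * v x) x = t • fderiv ℝ v x :=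
      congrFun (fderiv_const_smul_field (𝕜 := ℝ) (f := v) t) x
    rw [this, norm_smul, mul_pow, Real.norm_eq_abs, sq_abs]
  have hlog (x : E) : (t * v x) ^ 2 * (Real.log ((t * v x) ^ 2) - 1) =
      t ^ 2 * (v x ^ 2 * Real.log (v x ^ 2)) + t ^ 2 * (Real.log (t ^ 2) - 1) * v x ^ 2 := by
    have := Real.negMulLog_mul (t ^ 2) (v x ^ 2)
    rw [Real.negMulLog, Real.negMulLog, Real.negMulLog, ← mul_pow] at this
    linear_combination -this
  simp only [logEnergy, max_eq_left (mul_nonneg ht (hv _)), hgrad, hlog]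
  rw [integral_add (hsqlog.const_mul _) (hsq.const_mul _)]
  simp only [mul_pow, integral_const_mul]
  ring

lemma eventually_forall_perturbed_fiber_lt {K C c : ℝ} (hK : 0 < K) (hC : 0 < C) (hc : 0 < c) :
    ∀ᶠ ε in 𝓝[>] 0, ∀ s, 0 ≤ s →
      K * (s / 2 - s ^ 3 / 6) + C * ε * (s + s ^ 3) + c * (ε * Real.log ε) * s < K / 3 := by
  have hlog : ∀ᶠ ε in 𝓝[>] 0, Real.log ε < -(4 * C) / c :=
    Real.tendsto_log_nhdsGT_zero.eventually_lt_atBot _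
  filter_upwards [self_mem_nhdsWithin, hlog,
    (eventually_lt_nhds (b := K / (6 * C)) (by positivity)).filter_mono nhdsWithin_le_nhds]
    with ε (hε : 0 < ε) hlog hεK s hs
  have hlog' : 4 * C + c * Real.log ε < 0 := by
    rw [lt_div_iff₀ hc] at hlog
    linarith
  have hεK' : 0 < K / 6 - C * ε := by
    rw [lt_div_iff₀ (by positivity)] at hεK
    linarith
  have hmain : 0 ≤ (K / 6 - C * ε) * ((s - 1) ^ 2 * (s + 2)) := by positivity
  have hlinear : ε * s * (4 * C + c * Real.log ε) ≤ 0 :=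
    mul_nonpos_of_nonneg_of_nonpos (by positivity) hlog'.le
  have hconst : 0 < 2 * C * ε := by positivity
  calc K * (s / 2 - s ^ 3 / 6) + C * ε * (s + s ^ 3) + c * (ε * Real.log ε) * s
      = K / 3 - (K / 6 - C * ε) * ((s - 1) ^ 2 * (s + 2)) +
          ε * s * (4 * C + c * Real.log ε) - 2 * C * ε := by ring
    _ < K / 3 := by linarith

lemma fiber_le_of_integral_bounds {K A B M L CA CB CM CL m ν lam ε s : ℝ}
    (hν : 0 ≤ ν) (hCA : 0 ≤ CA) (hCB : 0 ≤ CB) (hCM : 0 ≤ CM) (hCL : 0 ≤ CL)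
    (hε : ε ∈ Set.Ioc 0 1) (hs : 0 ≤ s) (hM0 : 0 ≤ M)
    (hA : A ≤ K + CA * ε) (hB : K - CB * ε ^ 3 ≤ B) (hM : M ≤ CM * ε) (hmM : m * ε ≤ M)
    (hL : L ≤ Real.log ε * M + CL * ε) :
    s / 2 * A - s ^ 3 / 6 * B - s / 2 * (lam - 2 * ν * (Real.log s - 1)) * M + ν * s * L ≤
      K * (s / 2 - s ^ 3 / 6) +
        (CA / 2 + CB / 6 + |lam| / 2 * CM + ν * (CL + CM)) * ε * (s + s ^ 3) +
        ν * m * (ε * Real.log ε) * s := by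
  obtain ⟨hε0, hε1⟩ := hε
  have hgradient : s / 2 * A ≤ s / 2 * (K + CA * ε) := by gcongr
  have hcritical : s ^ 3 / 6 * (K - CB * ε) ≤ s ^ 3 / 6 * B := by
    have : ε ^ 3 ≤ ε := pow_le_of_le_one hε0.le hε1 three_ne_zero
    have : CB * ε ^ 3 ≤ CB * ε := by gcongr
    gcongr
    linarith
  have hlinear : -lam * (s / 2 * M) ≤ |lam| * (s / 2 * (CM * ε)) := by
    have := neg_le_abs lam
    gcongr
  have hlogS : ν * s * (Real.log s - 1) * M ≤ ν * s ^ 3 * (CM * ε) := by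
    have hlog : Real.log s - 1 ≤ s ^ 2 := by nlinarith [Real.log_le_self hs]
    calc ν * s * (Real.log s - 1) * M ≤ ν * s * s ^ 2 * (CM * ε) := by gcongr
      _ = ν * s ^ 3 * (CM * ε) := by ring
  have hlogE : ν * s * L ≤ ν * s * (Real.log ε * (m * ε) + CL * ε) := by
    have : Real.log ε * M ≤ Real.log ε * (m * ε) :=
      mul_le_mul_of_nonpos_left hmM (Real.log_nonpos hε0.le hε1)
    gcongr
    linarith
  have : 0 ≤ (CA / 2 + |lam| / 2 * CM + ν * CL) * ε * s ^ 3 := by positivity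
  have : 0 ≤ (CB / 6 + ν * CM) * ε * s := by positivity
  linarith

section CutoffBubble

variable {E : Type*} [NormedAddCommGroup E] [InnerProductSpace ℝ E] [FiniteDimensional ℝ E]
  [MeasurableSpace E] [BorelSpace E] {φ : E → ℝ} {Ω : Set E} {μ ε t : ℝ}

lemma logEnergy_const_mul_cutoffBubble_le (lam μ : ℝ) (hφ : IsCutoffNearZero φ Ω) (hε : 0 < ε)
    (ht : 0 ≤ t) :
    logEnergy lam μ Ω (fun x ↦ t * cutoffBubble φ ε x) ≤
      t ^ 2 / 2 * (∫ x, ‖fderiv ℝ (cutoffBubble φ ε) x‖ ^ 2) -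
        t ^ 6 / 6 * (∫ x, cutoffBubble φ ε x ^ 6) -
        t ^ 2 / 2 * (lam + μ * (Real.log (t ^ 2) - 1)) * (∫ x, cutoffBubble φ ε x ^ 2) -
        μ / 2 * t ^ 2 * ∫ x, cutoffBubble φ ε x ^ 2 * Real.log (cutoffBubble φ ε x ^ 2) := by
  have hint {f : ℝ → ℝ} (hf : Continuous f) (hf0 : f 0 = 0) :
      IntegrableOn (fun x ↦ f (cutoffBubble φ ε x)) Ω :=
    (integrable_comp_cutoffBubble hφ.contDiff.continuous hφ.hasCompactSupport hε hf
      hf0).integrableOn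
  rw [logEnergy_const_mul lam μ (cutoffBubble_nonneg hφ.nonneg hε) (hint (continuous_pow 2)
      (by simp)) (hint continuous_sq_mul_log_sq (by simp)) ht,
    setIntegral_comp_cutoffBubble hφ.support_subset (f := (· ^ 6)) (by simp),
    setIntegral_comp_cutoffBubble hφ.support_subset (f := (· ^ 2)) (by simp),
    setIntegral_comp_cutoffBubble hφ.support_subset (f := fun s ↦ s ^ 2 * Real.log (s ^ 2))
      (by simp)]
  gcongr _ * ?_ - _ - _ - _
  exact setIntegral_le_integral
    (integrable_norm_fderiv_cutoffBubble_sq hφ.contDiff hφ.hasCompactSupport hε)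
    (.of_forall fun x ↦ sq_nonneg _)

variable [Fact (finrank ℝ E = 3)]

lemma exists_logEnergy_const_mul_cutoffBubble_le (lam : ℝ) (hμ : μ < 0)
    (hφ : IsCutoffNearZero φ Ω) :
    ∃ C c, 0 < C ∧ 0 < c ∧ ∀ ε ∈ Set.Ioc (0 : ℝ) 1, ∀ t, 0 ≤ t →
      logEnergy lam μ Ω (fun x ↦ t * cutoffBubble φ ε x) ≤
        (∫ x : E, ‖fderiv ℝ (bubble 1) x‖ ^ 2) * (t ^ 2 / 2 - (t ^ 2) ^ 3 / 6) +
          C * ε * (t ^ 2 + (t ^ 2) ^ 3) + c * (ε * Real.log ε) * t ^ 2 := by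
  obtain ⟨CA, hCA, hA⟩ := exists_integral_norm_fderiv_cutoffBubble_sq_le hφ.contDiff
    hφ.hasCompactSupport hφ.eventuallyEq_one
  obtain ⟨CB, hCB, hB⟩ := exists_le_integral_cutoffBubble_pow_six hφ.contDiff.continuous
    hφ.hasCompactSupport hφ.eventuallyEq_one
  obtain ⟨CM, hCM, hM⟩ := exists_integral_cutoffBubble_sq_le hφ.contDiff.continuous
    hφ.hasCompactSupport
  obtain ⟨CL, hCL, hL⟩ := exists_integral_cutoffBubble_sq_mul_log_le hφ.contDiff.continuous
    hφ.hasCompactSupport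
  obtain ⟨m, hm, hmM⟩ := exists_le_integral_cutoffBubble_sq hφ.contDiff.continuous
    hφ.hasCompactSupport hφ.eventuallyEq_one
  obtain ⟨ν, hν, rfl⟩ : ∃ ν, 0 < ν ∧ μ = -2 * ν := ⟨-μ / 2, by linarith, by ring⟩
  refine ⟨CA / 2 + CB / 6 + |lam| / 2 * CM + ν * (CL + CM) + 1, ν * m, by positivity,
    by positivity, fun ε hε t ht ↦ ?_⟩
  refine (logEnergy_const_mul_cutoffBubble_le lam _ hφ hε.1 ht).trans ?_
  have hfiber := fiber_le_of_integral_bounds (lam := lam) hν.le hCA hCB hCM hCL hε (sq_nonneg t)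
    (integral_nonneg fun x ↦ sq_nonneg _) (hA ε hε.1) (hB ε hε.1) (hM ε hε.1) (hmM ε hε) (hL ε hε.1)
  have : 0 ≤ 1 * ε * (t ^ 2 + (t ^ 2) ^ 3) := by have := hε.1; positivity
  linarith

theorem stmt_19_general (lam : ℝ) (hμ : μ < 0) (hφ : IsCutoffNearZero φ Ω) :
    ∃ ε₀, 0 < ε₀ ∧ ∀ ε ∈ Set.Ioo 0 ε₀, ∀ t, 0 ≤ t →
      logEnergy lam μ Ω (fun x ↦ t * cutoffBubble φ ε x) <
        (∫ x : E, ‖fderiv ℝ (bubble 1) x‖ ^ 2) / 3 := by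
  obtain ⟨C, c, hC, hc, hbound⟩ := exists_logEnergy_const_mul_cutoffBubble_le lam hμ hφ
  refine mem_nhdsGT_iff_exists_Ioo_subset.mp ?_
  filter_upwards [Ioc_mem_nhdsGT one_pos,
    eventually_forall_perturbed_fiber_lt (integral_norm_fderiv_bubble_sq_pos (E := E)) hC hc]
    with ε hε hfiber t ht
  exact (hbound ε hε t ht).trans_lt (hfiber (t ^ 2) (sq_nonneg t))

end CutoffBubble

end Energy

section RadialCutoff

open Topology

variable {E : Type*} [NormedAddCommGroup E] [InnerProductSpace ℝ E]

lemma contDiff_comp_norm {n : WithTop ℕ∞} {ψ : ℝ → ℝ} (hψ : ContDiff ℝ n ψ) {c : ℝ}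
    (hconst : (fun x : E ↦ ψ ‖x‖) =ᶠ[𝓝 0] fun _ ↦ c) : ContDiff ℝ n (fun x : E ↦ ψ ‖x‖) := by
  refine contDiff_iff_contDiffAt.mpr fun x ↦ ?_
  rcases eq_or_ne x 0 with rfl | hx
  · exact contDiffAt_const.congr_of_eventuallyEq hconst
  · exact hψ.contDiffAt.comp x (contDiffAt_norm ℝ hx)

lemma IsCutoffNearZero.comp_norm [FiniteDimensional ℝ E] {ψ : ℝ → ℝ} {ρ R : ℝ} {Ω : Set E}
    (hρ : 0 < ρ) (hball : Metric.closedBall 0 R ⊆ Ω) (hψ : ContDiff ℝ 1 ψ)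
    (hψ1 : ∀ r, 0 ≤ r → r ≤ ρ → ψ r = 1) (hψ_nonneg : ∀ r, ρ ≤ r → r ≤ R → 0 ≤ ψ r)
    (hψ0 : ∀ r, R ≤ r → ψ r = 0) : IsCutoffNearZero (fun x ↦ ψ ‖x‖) Ω := by
  have hone : (fun x : E ↦ ψ ‖x‖) =ᶠ[𝓝 0] 1 := by
    filter_upwards [Metric.ball_mem_nhds 0 hρ] with x hx
    exact hψ1 _ (norm_nonneg x) (mem_ball_zero_iff.mp hx).le
  have hzero : ∀ x ∉ Metric.closedBall (0 : E) R, ψ ‖x‖ = 0 := fun x hx ↦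
    hψ0 _ (not_le.mp (mt mem_closedBall_zero_iff.mpr hx)).le
  refine ⟨contDiff_comp_norm hψ hone, .intro (isCompact_closedBall 0 R) hzero, fun x ↦ ?_, hone,
    (Function.support_subset_iff'.mpr hzero).trans hball⟩
  rcases le_total ‖x‖ ρ with hxρ | hρx
  · exact (hψ1 _ (norm_nonneg x) hxρ).symm ▸ zero_le_one
  rcases le_total ‖x‖ R with hxR | hRx
  · exact hψ_nonneg _ hρx hxR
  · exact (hψ0 _ hRx).ge

end RadialCutoff

/-- Lemma 3.7 (`N = 3`, `(λ, μ) ∈ C₀`): if `μ < 0` and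
`K₃/3 + (μ/2) e^{-λ/μ} |Ω| > 0` (where `K₃ = ∫_{ℝ³} |∇u_1|² = S^{3/2}`), then with
`U_ε(x) = ψ(|x|) u_ε(x)` there is `ε₀ > 0` such that `I(t U_ε) < K₃/3 = (1/3) S^{3/2}`
for all `ε ∈ (0, ε₀)` and `t ≥ 0` (here `2* = 6`). -/
theorem stmt_19 (lam μ : ℝ) (hμ : μ < 0)
    (Ω : Set (EuclideanSpace ℝ (Fin 3))) (hΩo : IsOpen Ω)
    (hΩb : Bornology.IsBounded Ω) (h0Ω : (0 : EuclideanSpace ℝ (Fin 3)) ∈ Ω)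
    (u : ℝ → EuclideanSpace ℝ (Fin 3) → ℝ)
    (hu : ∀ ε : ℝ, 0 < ε → ∀ x : EuclideanSpace ℝ (Fin 3),
      u ε x = (3 : ℝ) ^ ((1 : ℝ) / 4) * (ε / (ε ^ 2 + ‖x‖ ^ 2)) ^ ((1 : ℝ) / 2))
    (K : ℝ) (hK : K = ∫ x : EuclideanSpace ℝ (Fin 3), ‖fderiv ℝ (u 1) x‖ ^ 2)
    (hC₀ : K / 3 + μ / 2 * Real.exp (-lam / μ) * (volume Ω).toReal > 0)
    (ρ : ℝ) (hρ : 0 < ρ) (hρ1 : 4 * ρ ^ 2 < 1)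
    (hball : Metric.closedBall (0 : EuclideanSpace ℝ (Fin 3)) (2 * ρ) ⊆ Ω)
    (ψ : ℝ → ℝ) (hψs : ContDiff ℝ 1 ψ)
    (hψ1 : ∀ r : ℝ, 0 ≤ r → r ≤ ρ → ψ r = 1)
    (hψ01 : ∀ r : ℝ, ρ ≤ r → r ≤ 2 * ρ → ψ r ∈ Set.Icc (0 : ℝ) 1)
    (hψ0 : ∀ r : ℝ, 2 * ρ ≤ r → ψ r = 0)
    (I : (EuclideanSpace ℝ (Fin 3) → ℝ) → ℝ)
    (hI : ∀ v : EuclideanSpace ℝ (Fin 3) → ℝ,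
      I v = (1 / 2) * (∫ x in Ω, ‖fderiv ℝ v x‖ ^ 2) -
        (1 / 6) * (∫ x in Ω, (max (v x) 0) ^ 6) -
        (lam / 2) * (∫ x in Ω, (max (v x) 0) ^ 2) -
        (μ / 2) * (∫ x in Ω, (max (v x) 0) ^ 2 * (Real.log ((max (v x) 0) ^ 2) - 1))) :
    ∃ ε₀ : ℝ, 0 < ε₀ ∧ ∀ ε ∈ Set.Ioo (0 : ℝ) ε₀, ∀ t : ℝ, 0 ≤ t →
      I (fun x => t * (ψ ‖x‖ * u ε x)) < K / 3 := by
  have : Fact (Module.finrank ℝ (EuclideanSpace ℝ (Fin 3)) = 3) := ⟨finrank_euclideanSpace_fin⟩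
  obtain ⟨ε₀, hε₀, hlt⟩ := stmt_19_general lam hμ
    (.comp_norm hρ hball hψs hψ1 (fun r hρr hr ↦ (hψ01 r hρr hr).1) hψ0)
  refine ⟨ε₀, hε₀, fun ε hε t ht ↦ ?_⟩
  rw [hI, hK, funext (hu 1 one_pos), funext (hu ε hε.1)]
  exact hlt ε hε t ht
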